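/- Let K be a simplicial complex whose vertex set is partitioned into parts V_0,…,V_m with H̃_{m-1}(K, F) = 0 for a field F. For S ⊆ {0,…,m}, let K̃_S be the subcomplex of simplices of K whose colour set does not contain S. If H̃_{|S|-2}(K̃_S, F) = 0 for every S with 1 ≤ |S| ≤ m, then K contains a rainbow simplex. -/

import Mathlib

open Finset

/-- The faces of an abstract simplicial complex: a set of nonempty finite sets of
vertices, closed under taking nonempty subsets. -/
def IsComplex {V : Type*} (S : Set (Finset V)) : Prop :=
  (∀ s ∈ S, s.Nonempty) ∧ ∀ s ∈ S, ∀ t ⊆ s, t.Nonempty → t ∈ S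

/-- The nerve of a collection `Γ` of (sub)complexes, as a set of finsets of the index
type: the simplices are the nonempty subcollections with a common face. -/
def nerveC {ι V : Type*} (Γ : ι → Set (Finset V)) : Set (Finset ι) :=
  {σ | σ.Nonempty ∧ (⋂ i ∈ (σ : Finset ι), Γ i).Nonempty}

/-- Simplicial `n`-chains (dimension `n`, i.e. on vertex sets of cardinality `n+1`)
on the vertex type `V`, with coefficients in `A`. -/
abbrev Chains (A V : Type*) [AddCommGroup A] [LinearOrder V] (n : ℕ) : Type _ :=
  {s : Finset V // s.card = n + 1} →₀ A

variable (R : Type*) [CommRing R] (A : Type*) [AddCommGroup A] [Module R A]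
variable (V : Type*) [LinearOrder V]

/-- The simplicial boundary map, with the usual alternating signs determined by the
linear order on the vertices. -/
noncomputable def bdry (n : ℕ) : Chains A V (n + 1) →ₗ[R] Chains A V n :=
  Finsupp.lsum R fun s =>
    ∑ v ∈ (s : Finset V).attach,
      ((-1 : ℤ) ^ (((s : Finset V).filter (fun w => w < v.1)).card)) •
        (Finsupp.lsingle (R := R) ⟨(s : Finset V).erase v.1, by
          rw [Finset.card_erase_of_mem v.2, s.2]; rfl⟩)

/-- The augmentation map on `0`-chains. -/
noncomputable def aug : Chains A V 0 →ₗ[R] A :=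
  Finsupp.lsum R fun _ => LinearMap.id

/-- Reduced cycles: kernel of the boundary map, resp. of the augmentation in degree 0. -/
noncomputable def cycles : (n : ℕ) → Submodule R (Chains A V n)
  | 0 => LinearMap.ker (aug R A V)
  | (n + 1) => LinearMap.ker (bdry R A V n)

/-- Chains supported on the simplices belonging to `S`. -/
def chainsIn (S : Set (Finset V)) (n : ℕ) : Submodule R (Chains A V n) :=
  Finsupp.supported A R {s : {s : Finset V // s.card = n + 1} | ↑s ∈ S}

/-- Reduced cycles of the complex `S`. -/
noncomputable def cyclesIn (S : Set (Finset V)) (n : ℕ) : Submodule R (Chains A V n) :=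
  cycles R A V n ⊓ chainsIn R A V S n

/-- Boundaries of chains of the complex `S`. -/
noncomputable def boundariesIn (S : Set (Finset V)) (n : ℕ) : Submodule R (Chains A V n) :=
  Submodule.map (bdry R A V n) (chainsIn R A V S (n + 1))

/-- Reduced simplicial homology of the complex `S` in degree `n ≥ 0`,
with coefficients in the `R`-module `A`. -/
noncomputable abbrev redH (S : Set (Finset V)) (n : ℕ) : Type _ :=
  (cyclesIn R A V S n) ⧸
    (Submodule.comap (cyclesIn R A V S n).subtype (boundariesIn R A V S n))

/-- Vanishing of the reduced homology of `S` in degree `n : ℤ`, with the convention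
that `H̃₋₁(S) = 0` iff `S` is nonempty (and trivial vanishing below degree `-1`). -/
def RedHVanish (S : Set (Finset V)) (n : ℤ) : Prop :=
  if n < -1 then True
  else if n = -1 then S.Nonempty
  else Subsingleton (redH R A V S n.toNat)

open scoped Classical in
/-- The dimension (rank) of the reduced homology of `S` in degree `n : ℤ`; in degree `-1`
it is `0` iff `S` is nonempty, in accordance with the convention. -/
noncomputable def redHRank (S : Set (Finset V)) (n : ℤ) : Cardinal :=
  if n < -1 then 0
  else if n = -1 then (if S.Nonempty then (0 : Cardinal) else 1)
  else Module.rank R (redH R A V S n.toNat)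

/-!
Over a commutative ring `R`, the augmented chains of the full simplex on `X` form the exterior
algebra of the free module on `X`, with the Koszul differential contracting with the sum of the
coefficients. A map of vertices acts on it by functoriality, with no choice of signs.

Suppose that the reduced homology of `K̃_S` vanishes in degree `|S| - 2` for all nonempty sets `S`
of colours. Filling cycles one simplex at a time then gives a chain map `L`, with `L 1 = 1`, from
the chains of the simplex on the colours to those on the vertices, carrying `S` into `K̃_S`.
Composing with the colouring gives a chain endomorphism `f` of the simplex on the colours. No
simplex of `K̃_S` uses all the colours of `S`, so the coefficient of `S` in `f S` is zero unless
`S = ∅`, where it is `1`: the Lefschetz number of `f` is `1`. But the augmented complex of a simplex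
is contractible, so that number is `0`. Hence the homology of some `K̃_S` does not vanish; under the
hypotheses this can only be the set `S` of all colours, and a simplex of `K` must use them all, for
otherwise `K̃_S = K`.
-/

section ExteriorAlgebra

open CliffordAlgebra (contractLeft involute)
open ExteriorAlgebra (ι)

variable {R} {M N I : Type*} [AddCommGroup M] [Module R M] [AddCommGroup N] [Module R N]
  [LinearOrder I] (b : Module.Basis I R M) (d : Module.Dual R M)

theorem exteriorAlgebraBasis_eq_prod_sort (s : Finset I) :
    b.ExteriorAlgebra s = ((s.sort.map b).map (ι R)).prod := by
  rw [← s.listMap_orderEmbOfFin_finRange rfl, List.map_map, List.map_map, ← List.ofFn_eq_map]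
  exact (ExteriorAlgebra.basis_apply_ofCard b rfl).trans (ExteriorAlgebra.ιMulti_apply _)

theorem exteriorAlgebraBasis_empty : b.ExteriorAlgebra ∅ = 1 := by
  simp [exteriorAlgebraBasis_eq_prod_sort]

theorem exteriorAlgebraBasis_singleton (i : I) : b.ExteriorAlgebra {i} = ι R (b i) := by
  simp [exteriorAlgebraBasis_eq_prod_sort]

theorem exteriorAlgebraBasis_insert_of_forall_lt {i : I} {s : Finset I} (h : ∀ j ∈ s, i < j) :
    b.ExteriorAlgebra (insert i s) = ι R (b i) * b.ExteriorAlgebra s := by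
  have hi : i ∉ s := fun hi => (h i hi).false
  simp [exteriorAlgebraBasis_eq_prod_sort, Finset.sort_insert (· ≤ ·) (fun j hj => (h j hj).le) hi]

theorem ι_mul_exteriorAlgebraBasis_mem_span (i : I) (s : Finset I) :
    ι R (b i) * b.ExteriorAlgebra s ∈ R ∙ b.ExteriorAlgebra (insert i s) := by
  let σ : Set.powersetCard I 1 := Set.powersetCard.ofCard (Finset.card_singleton i)
  let τ : Set.powersetCard I s.card := Set.powersetCard.ofCard rfl
  rw [← exteriorAlgebraBasis_singleton, Submodule.mem_span_singleton]
  by_cases h : Disjoint σ.val τ.val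
  · refine ⟨((Set.powersetCard.permOfDisjoint h).sign : ℤ), ?_⟩
    have hunion : (Set.powersetCard.disjUnion h : Finset I) = insert i s := by
      rw [Set.powersetCard.coe_disjUnion, Finset.disjUnion_eq_union]
      rfl
    have hmul := ExteriorAlgebra.basis_mul_of_disjoint b σ τ h
    rw [hunion, Units.smul_def, ← Int.cast_smul_eq_zsmul R] at hmul
    exact hmul.symm
  · exact ⟨0, by rw [zero_smul]; exact (ExteriorAlgebra.basis_mul_of_not_disjoint b σ τ h).symm⟩

theorem ι_mul_mem_span_image_Iic (i : I) {s : Finset I} {x : ExteriorAlgebra R M}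
    (hx : x ∈ Submodule.span R (b.ExteriorAlgebra '' Set.Iic s)) :
    ι R (b i) * x ∈ Submodule.span R (b.ExteriorAlgebra '' Set.Iic (insert i s)) := by
  induction hx using Submodule.span_induction with
  | mem _ hx =>
    obtain ⟨t, ht, rfl⟩ := hx
    have hsub : {insert i t} ⊆ Set.Iic (insert i s) :=
      Set.singleton_subset_iff.2 (Finset.insert_subset_insert i ht)
    refine Submodule.span_mono (Set.image_mono hsub) ?_
    rw [Set.image_singleton]
    exact ι_mul_exteriorAlgebraBasis_mem_span b i t
  | zero => simp
  | add x y _ _ hx hy =>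
    rw [mul_add]
    exact Submodule.add_mem _ hx hy
  | smul r x _ hx =>
    rw [mul_smul_comm]
    exact Submodule.smul_mem _ r hx

theorem involute_exteriorAlgebraBasis (s : Finset I) :
    involute (b.ExteriorAlgebra s) = (-1 : R) ^ #s • b.ExteriorAlgebra s := by
  rw [exteriorAlgebraBasis_eq_prod_sort, CliffordAlgebra.involute_prod_map_ι, List.length_map,
    Finset.length_sort]

theorem contractLeft_exteriorAlgebraBasis (s : Finset I) :
    contractLeft d (b.ExteriorAlgebra s) =
      ∑ i ∈ s, ((-1) ^ #{j ∈ s | j < i} * d (b i)) • b.ExteriorAlgebra (s.erase i) := by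
  induction s using Finset.induction_on_min with
  | empty => simp [exteriorAlgebraBasis_empty]
  | insert a s ha ih =>
    have hnot : a ∉ s := fun h => (ha a h).false
    have hmin : #{j ∈ insert a s | j < a} = 0 := by
      simpa [Finset.filter_eq_empty_iff] using fun j hj => (ha j hj).le
    rw [exteriorAlgebraBasis_insert_of_forall_lt b ha, CliffordAlgebra.contractLeft_ι_mul, ih,
      Finset.sum_insert hnot, hmin, Finset.erase_insert hnot, pow_zero, one_mul, sub_eq_add_neg,
      Finset.mul_sum, ← Finset.sum_neg_distrib]
    congr 1
    refine Finset.sum_congr rfl fun i hi => ?_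
    have hcard : #{j ∈ insert a s | j < i} = #{j ∈ s | j < i} + 1 := by
      rw [Finset.filter_insert, if_pos (ha i hi), Finset.card_insert_of_notMem (by simp [hnot])]
    have hins := exteriorAlgebraBasis_insert_of_forall_lt b
      (fun j hj => ha j (Finset.mem_of_mem_erase hj) : ∀ j ∈ s.erase i, a < j)
    rw [hcard, Finset.erase_insert_of_ne (ha i hi).ne, hins, mul_smul_comm, pow_succ]
    simp

theorem contractLeft_map (g : M →ₗ[R] N) (e : Module.Dual R N) (x : ExteriorAlgebra R M) :
    contractLeft e (ExteriorAlgebra.map g x) = ExteriorAlgebra.map g (contractLeft (e ∘ₗ g) x) := by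
  induction x using CliffordAlgebra.left_induction with
  | algebraMap r => simp
  | add x y hx hy => simp only [map_add, hx, hy]
  | ι_mul x m hx =>
    have hι : ExteriorAlgebra.map g (CliffordAlgebra.ι 0 m) = CliffordAlgebra.ι 0 (g m) :=
      ExteriorAlgebra.map_apply_ι g m
    simp [CliffordAlgebra.contractLeft_ι_mul, hι, hx]

theorem involute_contractLeft (x : ExteriorAlgebra R M) :
    involute (contractLeft d x) = -contractLeft d (involute x) := by
  induction x using CliffordAlgebra.left_induction with
  | algebraMap r => simp
  | add x y hx hy => simp only [map_add, hx, hy, neg_add]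
  | ι_mul x m hx => simp [CliffordAlgebra.contractLeft_ι_mul, hx]

end ExteriorAlgebra

section Lefschetz

open CliffordAlgebra (contractLeft involute)
open ExteriorAlgebra (ι)

variable {R}

/-- If `h` contracts the complex `(M, d)`, the chain map `f` equals `d (f h) + (f h) d`, which the
grading involution `ε` turns into a commutator. -/
theorem trace_mul_eq_zero_of_contraction {M : Type*} [AddCommGroup M] [Module R M]
    {d h f ε : Module.End R M} (hdh : d * h + h * d = 1) (hdf : d * f = f * d)
    (hεd : ε * d = -(d * ε)) : LinearMap.trace R M (f * ε) = 0 := by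
  have hcomm : f * ε = d * (f * h * ε) - f * h * ε * d :=
    calc f * ε = f * (d * h + h * d) * ε := by rw [hdh, mul_one]
      _ = f * d * (h * ε) - f * h * -(d * ε) := by noncomm_ring
      _ = d * (f * h * ε) - f * h * ε * d := by rw [← hdf, ← hεd]; noncomm_ring
  rw [hcomm, map_sub, LinearMap.trace_mul_comm, sub_self]

theorem sum_neg_one_pow_card_mul_repr_eq_zero {M I : Type*} [AddCommGroup M] [Module R M]
    [LinearOrder I] [Fintype I] (b : Module.Basis I R M) {d : Module.Dual R M} {m : M}
    (hm : d m = 1) {f : Module.End R (ExteriorAlgebra R M)}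
    (hf : ∀ x, contractLeft d (f x) = f (contractLeft d x)) :
    ∑ s, (-1) ^ #s * b.ExteriorAlgebra.repr (f (b.ExteriorAlgebra s)) s = 0 := by
  let ε : Module.End R (ExteriorAlgebra R M) := involute.toLinearMap
  have htrace : LinearMap.trace R _ (f * ε) = 0 := by
    refine trace_mul_eq_zero_of_contraction (d := contractLeft d)
      (h := LinearMap.mulLeft R (ι R m)) ?_ (LinearMap.ext hf) (LinearMap.ext fun x => ?_)
    · ext x
      simp [CliffordAlgebra.contractLeft_ι_mul, hm]
    · exact involute_contractLeft d x
  rw [← htrace, LinearMap.trace_eq_matrix_trace R b.ExteriorAlgebra, Matrix.trace]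
  refine Finset.sum_congr rfl fun s _ => ?_
  simp [ε, LinearMap.toMatrix_apply, involute_exteriorAlgebraBasis]

end Lefschetz

section Chains

open CliffordAlgebra (contractLeft)

/-- The augmented simplicial chains of the full simplex on `X`: the wedge of the vertices of a
simplex, in increasing order, is the simplex, and `1` is the empty simplex. -/
abbrev AugChains (X : Type*) : Type _ := ExteriorAlgebra R (X →₀ R)

/-- The sum of the coefficients of a `0`-chain, as a linear form. -/
noncomputable def coeffSum (X : Type*) : Module.Dual R (X →₀ R) :=
  Finsupp.linearCombination R fun _ => 1

/-- The boundary map of the augmented chain complex, as the Koszul differential. -/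
noncomputable def augBdry (X : Type*) : AugChains R X →ₗ[R] AugChains R X :=
  contractLeft (coeffSum R X)

/-- The basis of the augmented chains consisting of all the simplices, with the empty one. -/
noncomputable def simplexBasis : Module.Basis (Finset V) R (AugChains R V) :=
  (Finsupp.basisSingleOne (R := R) (ι := V)).ExteriorAlgebra

/-- The augmented chains of the complex `S` carried by the simplices with `n` vertices, where the
empty simplex is a simplex of every complex. -/
noncomputable def augChainsIn (S : Set (Finset V)) (n : ℕ) : Submodule R (AugChains R V) :=
  Submodule.span R (simplexBasis R V '' {s | #s = n ∧ s ∈ insert ∅ S})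

/-- The chain map induced on augmented chains by a map of vertices. -/
noncomputable def augChainsMap {X Y : Type*} (c : X → Y) : AugChains R X →ₐ[R] AugChains R Y :=
  ExteriorAlgebra.map (Finsupp.lmapDomain R R c)

variable {R V}

theorem augBdry_augChainsMap {X Y : Type*} (c : X → Y) (x : AugChains R X) :
    augBdry R Y (augChainsMap R c x) = augChainsMap R c (augBdry R X x) := by
  have hc : coeffSum R Y ∘ₗ Finsupp.lmapDomain R R c = coeffSum R X := by
    ext
    simp [coeffSum]
  rw [augBdry, augChainsMap, contractLeft_map, hc, augBdry]

theorem augBdry_augBdry {X : Type*} (x : AugChains R X) : augBdry R X (augBdry R X x) = 0 :=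
  CliffordAlgebra.contractLeft_contractLeft _ x

theorem sum_neg_one_pow_card_mul_repr_simplexBasis_eq_zero [Fintype V] [Nonempty V]
    {f : Module.End R (AugChains R V)} (hf : ∀ x, augBdry R V (f x) = f (augBdry R V x)) :
    ∑ s, (-1) ^ #s * (simplexBasis R V).repr (f (simplexBasis R V s)) s = 0 := by
  obtain ⟨v⟩ := ‹Nonempty V›
  have hv : coeffSum R V (Finsupp.single v 1) = 1 := by simp [coeffSum]
  exact (sum_neg_one_pow_card_mul_repr_eq_zero Finsupp.basisSingleOne hv hf :)

theorem simplexBasis_empty : simplexBasis R V ∅ = 1 :=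
  exteriorAlgebraBasis_empty _

theorem augBdry_simplexBasis (s : Finset V) :
    augBdry R V (simplexBasis R V s) =
      ∑ v ∈ s, (-1 : R) ^ #{w ∈ s | w < v} • simplexBasis R V (s.erase v) := by
  simp [augBdry, simplexBasis, contractLeft_exteriorAlgebraBasis, coeffSum]

theorem augBdry_simplexBasis_singleton (v : V) : augBdry R V (simplexBasis R V {v}) = 1 := by
  simp [augBdry_simplexBasis, simplexBasis_empty, Finset.filter_singleton]

theorem augBdry_simplexBasis_mem_span (s : Finset V) :
    augBdry R V (simplexBasis R V s) ∈
      Submodule.span R (simplexBasis R V '' {t | ∃ v ∈ s, t = s.erase v}) := by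
  rw [augBdry_simplexBasis]
  exact Submodule.sum_mem _ fun v hv =>
    Submodule.smul_mem _ _ (Submodule.subset_span ⟨_, ⟨v, hv, rfl⟩, rfl⟩)

theorem augChainsMap_simplexBasis_mem_span {ι : Type*} [LinearOrder ι] (c : V → ι)
    (s : Finset V) :
    augChainsMap R c (simplexBasis R V s) ∈
      Submodule.span R (simplexBasis R ι '' Set.Iic (s.image c)) := by
  induction s using Finset.induction_on_min with
  | empty =>
    rw [simplexBasis_empty, map_one, ← simplexBasis_empty]
    exact Submodule.subset_span ⟨∅, Finset.empty_subset _, rfl⟩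
  | insert a s ha ih =>
    have hinsert : augChainsMap R c (simplexBasis R V (insert a s)) =
        ExteriorAlgebra.ι R (Finsupp.basisSingleOne (c a)) *
          augChainsMap R c (simplexBasis R V s) := by
      simp [simplexBasis, exteriorAlgebraBasis_insert_of_forall_lt _ ha, augChainsMap]
    rw [hinsert, Finset.image_insert]
    exact ι_mul_mem_span_image_Iic _ (c a) ih

/-- The inclusion of the `n`-chains in the augmented chains. -/
noncomputable def toAugChains (n : ℕ) : Chains R V n →ₗ[R] AugChains R V :=
  Finsupp.linearCombination R fun s => simplexBasis R V s

theorem toAugChains_injective (n : ℕ) :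
    Function.Injective (toAugChains n : Chains R V n →ₗ[R] AugChains R V) :=
  (simplexBasis R V).linearIndependent.comp _ Subtype.val_injective

theorem map_toAugChains_chainsIn {S : Set (Finset V)} (n : ℕ) :
    (chainsIn R R V S n).map (toAugChains n) = augChainsIn R V S (n + 1) := by
  rw [chainsIn, toAugChains, ← Finsupp.span_image_eq_map_linearCombination, augChainsIn]
  congr 1
  ext x
  constructor
  · rintro ⟨s, hs, rfl⟩
    exact ⟨s, ⟨s.2, Or.inr hs⟩, rfl⟩
  · rintro ⟨s, ⟨hcard, rfl | hs⟩, rfl⟩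
    · simp at hcard
    · exact ⟨⟨s, hcard⟩, hs, rfl⟩

theorem augBdry_toAugChains_succ (n : ℕ) (x : Chains R V (n + 1)) :
    augBdry R V (toAugChains (n + 1) x) = toAugChains n (bdry R R V n x) := by
  suffices h : augBdry R V ∘ₗ toAugChains (n + 1) = toAugChains n ∘ₗ bdry R R V n from
    LinearMap.congr_fun h x
  ext s
  simp [toAugChains, bdry, augBdry_simplexBasis, ← Finset.sum_attach (s : Finset V)]

theorem augBdry_toAugChains_zero (x : Chains R V 0) :
    augBdry R V (toAugChains 0 x) = algebraMap R _ (aug R R V x) := by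
  suffices h : augBdry R V ∘ₗ toAugChains 0 = Algebra.linearMap R _ ∘ₗ aug R R V from
    LinearMap.congr_fun h x
  ext ⟨s, hs⟩
  obtain ⟨v, rfl⟩ := Finset.card_eq_one.1 hs
  simp [toAugChains, aug, augBdry_simplexBasis_singleton]

theorem mem_cycles_iff {n : ℕ} {x : Chains R V n} :
    x ∈ cycles R R V n ↔ augBdry R V (toAugChains n x) = 0 := by
  cases n with
  | zero => simp [cycles, augBdry_toAugChains_zero]
  | succ n =>
    rw [augBdry_toAugChains_succ, map_eq_zero_iff _ (toAugChains_injective n)]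
    rfl

theorem exists_augBdry_eq_of_nonempty {S : Set (Finset V)} (hS : IsComplex S) (hne : S.Nonempty)
    {z : AugChains R V} (hz : z ∈ augChainsIn R V S 0) :
    ∃ y ∈ augChainsIn R V S 1, augBdry R V y = z := by
  obtain ⟨s, hs⟩ := hne
  obtain ⟨v, hv⟩ := hS.1 s hs
  have hvS : {v} ∈ S := hS.2 s hs {v} (Finset.singleton_subset_iff.2 hv) ⟨v, by simp⟩
  have hz1 : z ∈ R ∙ (1 : AugChains R V) := by
    refine Submodule.span_mono ?_ hz
    rintro _ ⟨t, ⟨ht, -⟩, rfl⟩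
    rw [Finset.card_eq_zero.1 ht, simplexBasis_empty]
    rfl
  obtain ⟨r, rfl⟩ := Submodule.mem_span_singleton.1 hz1
  refine ⟨r • simplexBasis R V {v}, Submodule.smul_mem _ r
    (Submodule.subset_span ⟨_, ⟨Finset.card_singleton v, Or.inr hvS⟩, rfl⟩), ?_⟩
  rw [map_smul, augBdry_simplexBasis_singleton]

theorem exists_augBdry_eq_of_subsingleton_redH {S : Set (Finset V)} {n : ℕ}
    (h : Subsingleton (redH R R V S n)) {z : AugChains R V} (hz : z ∈ augChainsIn R V S (n + 1))
    (hbdry : augBdry R V z = 0) : ∃ y ∈ augChainsIn R V S (n + 2), augBdry R V y = z := by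
  rw [← map_toAugChains_chainsIn] at hz
  obtain ⟨x, hxS, rfl⟩ := hz
  rw [Submodule.Quotient.subsingleton_iff, eq_top_iff] at h
  have hx : x ∈ boundariesIn R R V S n :=
    h (x := (⟨x, mem_cycles_iff.2 hbdry, hxS⟩ : cyclesIn R R V S n)) Submodule.mem_top
  obtain ⟨y, hyS, rfl⟩ := hx
  refine ⟨toAugChains (n + 1) y, ?_, augBdry_toAugChains_succ n y⟩
  rw [← map_toAugChains_chainsIn]
  exact Submodule.mem_map_of_mem hyS

theorem exists_augBdry_eq_of_redHVanish {S : Set (Finset V)} (hS : IsComplex S) {n : ℕ}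
    (h : RedHVanish R R V S ((n : ℤ) - 1)) {z : AugChains R V} (hz : z ∈ augChainsIn R V S n)
    (hbdry : augBdry R V z = 0) : ∃ y ∈ augChainsIn R V S (n + 1), augBdry R V y = z := by
  cases n with
  | zero => exact exists_augBdry_eq_of_nonempty hS (by simpa [RedHVanish] using h) hz
  | succ n =>
    have hsub : Subsingleton (redH R R V S n) := by
      rw [Nat.cast_succ, add_sub_cancel_right, RedHVanish, if_neg (by omega),
        if_neg (by omega)] at h
      exact h
    exact exists_augBdry_eq_of_subsingleton_redH hsub hz hbdry

end Chains

section Carriers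

variable {R V} {ι : Type*} [LinearOrder ι]

theorem exists_augBdry_eq_map_augBdry {X : Finset ι → Set (Finset V)} (hX : Monotone X)
    {S : Finset ι} (hS : S.Nonempty) (hXS : IsComplex (X S))
    (h : RedHVanish R R V (X S) ((#S : ℤ) - 2))
    {L : AugChains R ι →ₗ[R] AugChains R V}
    (hL : ∀ T ⊂ S, L (simplexBasis R ι T) ∈ augChainsIn R V (X T) #T ∧
      augBdry R V (L (simplexBasis R ι T)) = L (augBdry R ι (simplexBasis R ι T))) :
    ∃ y ∈ augChainsIn R V (X S) #S,
      augBdry R V y = L (augBdry R ι (simplexBasis R ι S)) := by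
  obtain ⟨n, hn⟩ : ∃ n, #S = n + 1 := Nat.exists_eq_succ_of_ne_zero hS.card_ne_zero
  rw [hn, Nat.cast_succ, show (n : ℤ) + 1 - 2 = n - 1 by ring] at h
  rw [hn]
  have hfaces := augBdry_simplexBasis_mem_span (R := R) S
  refine exists_augBdry_eq_of_redHVanish hXS h ?_ ?_
  · refine (Submodule.map_span_le L _ _).2 ?_ (Submodule.mem_map_of_mem hfaces)
    rintro _ ⟨_, ⟨i, hi, rfl⟩, rfl⟩
    refine Submodule.span_mono (Set.image_mono ?_) (hL _ (Finset.erase_ssubset hi)).1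
    rintro s ⟨hs, hsX⟩
    refine ⟨by rw [hs, Finset.card_erase_of_mem hi, hn, Nat.add_sub_cancel], ?_⟩
    exact Set.insert_subset_insert (hX (Finset.erase_subset i S)) hsX
  · have hcomm : Set.EqOn (augBdry R V ∘ₗ L) (L ∘ₗ augBdry R ι)
        (simplexBasis R ι '' {T | ∃ i ∈ S, T = S.erase i}) := by
      rintro _ ⟨_, ⟨i, hi, rfl⟩, rfl⟩
      exact (hL _ (Finset.erase_ssubset hi)).2
    calc augBdry R V (L (augBdry R ι (simplexBasis R ι S)))
        = L (augBdry R ι (augBdry R ι (simplexBasis R ι S))) :=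
          LinearMap.eqOn_span hcomm hfaces
      _ = 0 := by rw [augBdry_augBdry, map_zero]

theorem exists_linearMap_eq_on_card_eq_succ {M : Type*} [AddCommGroup M] [Module R M] (n : ℕ)
    (L : AugChains R ι →ₗ[R] M) (y : Finset ι → M) :
    ∃ L' : AugChains R ι →ₗ[R] M,
      (∀ S, #S = n + 1 → L' (simplexBasis R ι S) = y S) ∧
      (∀ S, #S ≤ n → L' (simplexBasis R ι S) = L (simplexBasis R ι S)) ∧
      ∀ S, #S ≤ n + 1 →
        L' (augBdry R ι (simplexBasis R ι S)) = L (augBdry R ι (simplexBasis R ι S)) := by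
  let L' : AugChains R ι →ₗ[R] M := (simplexBasis R ι).constr R fun S =>
    if #S = n + 1 then y S else L (simplexBasis R ι S)
  have hL'_le : ∀ S, #S ≤ n → L' (simplexBasis R ι S) = L (simplexBasis R ι S) := fun S hS => by
    simp [L', Module.Basis.constr_basis, (Nat.lt_succ_iff.2 hS).ne]
  refine ⟨L', fun S hS => ?_, hL'_le, fun S hS => ?_⟩
  · simp [L', Module.Basis.constr_basis, hS]
  · refine LinearMap.eqOn_span ?_ (augBdry_simplexBasis_mem_span S)
    rintro _ ⟨_, ⟨i, hi, rfl⟩, rfl⟩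
    exact hL'_le _ (Nat.lt_succ_iff.1 ((Finset.card_erase_lt_of_mem hi).trans_le hS))

theorem exists_chainMap_of_card_le {X : Finset ι → Set (Finset V)} (hX : Monotone X)
    (hXc : ∀ S, IsComplex (X S))
    (h : ∀ S, S.Nonempty → RedHVanish R R V (X S) ((#S : ℤ) - 2)) (n : ℕ) :
    ∃ L : AugChains R ι →ₗ[R] AugChains R V, L 1 = 1 ∧ ∀ S, #S ≤ n →
      L (simplexBasis R ι S) ∈ augChainsIn R V (X S) #S ∧
        augBdry R V (L (simplexBasis R ι S)) = L (augBdry R ι (simplexBasis R ι S)) := by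
  induction n with
  | zero =>
    let L : AugChains R ι →ₗ[R] AugChains R V := (simplexBasis R ι).constr R fun _ => 1
    have hL : L 1 = 1 := by
      rw [← simplexBasis_empty, Module.Basis.constr_basis]
    refine ⟨L, hL, fun S hS => ?_⟩
    obtain rfl : S = ∅ := by simpa using hS
    have hmem : simplexBasis R V ∅ ∈ augChainsIn R V (X ∅) 0 :=
      Submodule.subset_span ⟨∅, ⟨Finset.card_empty, Or.inl rfl⟩, rfl⟩
    constructor
    · simpa [simplexBasis_empty, hL] using hmem
    · simp [simplexBasis_empty, hL, augBdry]
  | succ n ih =>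
    obtain ⟨L, hL1, hL⟩ := ih
    have hfill : ∀ S, #S = n + 1 → ∃ y ∈ augChainsIn R V (X S) #S,
        augBdry R V y = L (augBdry R ι (simplexBasis R ι S)) := fun S hS =>
      have hne : S.Nonempty := Finset.card_pos.1 (hS ▸ n.succ_pos)
      exists_augBdry_eq_map_augBdry hX hne (hXc S) (h S hne) fun T hT =>
        hL T (Nat.lt_succ_iff.1 ((Finset.card_lt_card hT).trans_eq hS))
    choose! y hyX hy using hfill
    obtain ⟨L', hL'_top, hL'_le, hL'_bdry⟩ := exists_linearMap_eq_on_card_eq_succ n L y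
    refine ⟨L', ?_, fun S hS => ?_⟩
    · rw [← simplexBasis_empty, hL'_le ∅ (by simp), simplexBasis_empty, hL1]
    · rw [hL'_bdry S hS]
      rcases hS.eq_or_lt with hS | hS
      · rw [hL'_top S hS]
        exact ⟨hyX S hS, hy S hS⟩
      · rw [hL'_le S (Nat.lt_succ_iff.1 hS)]
        exact hL S (Nat.lt_succ_iff.1 hS)

theorem exists_chainMap_of_redHVanish [Finite ι] {X : Finset ι → Set (Finset V)}
    (hX : Monotone X) (hXc : ∀ S, IsComplex (X S))
    (h : ∀ S, S.Nonempty → RedHVanish R R V (X S) ((#S : ℤ) - 2)) :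
    ∃ L : AugChains R ι →ₗ[R] AugChains R V, L 1 = 1 ∧
      (∀ x, augBdry R V (L x) = L (augBdry R ι x)) ∧
      ∀ S, L (simplexBasis R ι S) ∈ augChainsIn R V (X S) #S := by
  have := Fintype.ofFinite ι
  obtain ⟨L, hL1, hL⟩ := exists_chainMap_of_card_le hX hXc h (Fintype.card ι)
  have hcomm : augBdry R V ∘ₗ L = L ∘ₗ augBdry R ι :=
    (simplexBasis R ι).ext fun S => (hL S S.card_le_univ).2
  exact ⟨L, hL1, LinearMap.congr_fun hcomm, fun S => (hL S S.card_le_univ).1⟩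

end Carriers

section Coloring

/-- The subcomplex `K̃_S` of the simplices of `K` on which the colouring `c` misses some colour
of `S`. -/
def missingColor {V ι : Type*} [DecidableEq ι] (K : Set (Finset V)) (c : V → ι) (S : Finset ι) :
    Set (Finset V) :=
  {s ∈ K | ¬ S ⊆ s.image c}

variable {R V} {ι : Type*}

theorem missingColor_mono {V : Type*} [DecidableEq ι] (K : Set (Finset V)) (c : V → ι) :
    Monotone (missingColor K c) :=
  fun _ _ hST _ hs => ⟨hs.1, fun hT => hs.2 (hST.trans hT)⟩

theorem isComplex_missingColor {V : Type*} [DecidableEq ι] {K : Set (Finset V)} (hK : IsComplex K)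
    (c : V → ι) (S : Finset ι) : IsComplex (missingColor K c S) :=
  ⟨fun s hs => hK.1 s hs.1, fun s hs t hts ht =>
    ⟨hK.2 s hs.1 t hts ht, fun hS => hs.2 (hS.trans (Finset.image_subset_image hts))⟩⟩

theorem repr_augChainsMap_eq_zero [LinearOrder ι] {K : Set (Finset V)} {c : V → ι}
    {S : Finset ι} (hS : S.Nonempty) {n : ℕ} {x : AugChains R V}
    (hx : x ∈ augChainsIn R V (missingColor K c S) n) :
    (simplexBasis R ι).repr (augChainsMap R c x) S = 0 := by
  nontriviality R
  have hspan : augChainsMap R c x ∈ Submodule.span R (simplexBasis R ι '' {S}ᶜ) := by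
    refine (Submodule.map_span_le (augChainsMap R c).toLinearMap _ _).2 ?_
      (Submodule.mem_map_of_mem hx)
    rintro _ ⟨s, ⟨-, hs⟩, rfl⟩
    refine Submodule.span_mono (Set.image_mono ?_) (augChainsMap_simplexBasis_mem_span c s)
    rintro T hT rfl
    rcases hs with rfl | hs
    · exact hS.ne_empty (Finset.subset_empty.1 hT)
    · exact hs.2 hT
  by_contra hne
  exact (Module.Basis.mem_span_image _).1 hspan (Finsupp.mem_support_iff.2 hne) rfl

theorem exists_not_redHVanish_missingColor [Nontrivial R] [LinearOrder ι] [Finite ι] [Nonempty ι]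
    {K : Set (Finset V)} (hK : IsComplex K) (c : V → ι) :
    ∃ S : Finset ι, S.Nonempty ∧ ¬ RedHVanish R R V (missingColor K c S) ((#S : ℤ) - 2) := by
  have := Fintype.ofFinite ι
  by_contra! h
  obtain ⟨L, hL1, hL, hLX⟩ :=
    exists_chainMap_of_redHVanish (missingColor_mono K c) (isComplex_missingColor hK c) h
  let f : Module.End R (AugChains R ι) := (augChainsMap R c).toLinearMap ∘ₗ L
  have hf : ∀ x, augBdry R ι (f x) = f (augBdry R ι x) := fun x => by
    simp [f, augBdry_augChainsMap, hL]
  have hlefschetz := sum_neg_one_pow_card_mul_repr_simplexBasis_eq_zero hf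
  rw [Finset.sum_eq_single ∅] at hlefschetz
  · have hf1 : f (simplexBasis R ι ∅) = simplexBasis R ι ∅ := by
      simp [f, simplexBasis_empty, hL1]
    simp [hf1] at hlefschetz
  · intro S _ hS
    exact mul_eq_zero_of_right _
      (repr_augChainsMap_eq_zero (Finset.nonempty_iff_ne_empty.2 hS) (hLX S))
  · simp

theorem exists_rainbow_of_image_eq_univ {V : Type*} [DecidableEq ι] [Fintype ι] [Nonempty ι]
    {K : Set (Finset V)} (hK : IsComplex K) {c : V → ι} {s : Finset V} (hs : s ∈ K)
    (hc : s.image c = Finset.univ) : ∃ t ∈ K, ∀ i, ∃! v, v ∈ t ∧ c v = i := by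
  have hsurj : Set.SurjOn c s (Finset.univ : Finset ι) := by
    rw [Set.SurjOn, ← Finset.coe_image, hc]
  obtain ⟨t, hts, hinj, himage⟩ := Finset.exists_subset_injOn_image_eq_of_surjOn _ _ hsurj
  have hcolor : ∀ i, ∃ v ∈ t, c v = i := fun i => by
    simpa using himage.ge (Finset.mem_univ i)
  obtain ⟨v, hv, -⟩ := hcolor (Classical.arbitrary ι)
  refine ⟨t, hK.2 s hs t hts ⟨v, hv⟩, fun i => ?_⟩
  obtain ⟨v, hv, rfl⟩ := hcolor i
  exact ⟨v, ⟨hv, rfl⟩, fun w hw => hinj hw.1 hv hw.2⟩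

end Coloring

theorem sperner_via_tilde_general {V : Type*} [LinearOrder V] (R : Type*) [CommRing R]
    [Nontrivial R] (m : ℕ) (K : Set (Finset V)) (hK : IsComplex K) (c : V → Fin (m + 1))
    (hH : RedHVanish R R V K ((m : ℤ) - 1))
    (h : ∀ S : Finset (Fin (m + 1)), 1 ≤ S.card → S.card ≤ m →
      RedHVanish R R V {s ∈ K | ¬ S ⊆ s.image c} ((S.card : ℤ) - 2)) :
    ∃ s ∈ K, ∀ i : Fin (m + 1), ∃! v, v ∈ s ∧ c v = i := by
  by_contra hrainbow
  have hmissing : missingColor K c Finset.univ = K := Set.sep_eq_self_iff_mem_true.2 fun s hs hc =>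
    hrainbow (exists_rainbow_of_image_eq_univ hK hs (Finset.univ_subset_iff.1 hc))
  obtain ⟨S, hS, hnot⟩ := exists_not_redHVanish_missingColor (R := R) hK c
  rcases S.card_le_univ.lt_or_eq with hlt | heq
  · rw [Fintype.card_fin] at hlt
    exact hnot (h S hS.card_pos (Nat.lt_succ_iff.1 hlt))
  · obtain rfl := S.card_eq_iff_eq_univ.1 heq
    rw [hmissing, heq, Fintype.card_fin] at hnot
    exact hnot (by convert hH using 1; push_cast; ring)

/-- Sperner-type theorem via the complexes `K̃_S`: if `H̃_{m-1}(K) = 0` and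
`H̃_{|S|-2}(K̃_S) = 0` for all `S` with `1 ≤ |S| ≤ m`, then `K` has a rainbow simplex. -/
theorem sperner_via_tilde {V : Type*} [LinearOrder V] (F : Type*) [Field F]
    (m : ℕ) (K : Set (Finset V)) (hK : IsComplex K) (hvert : ∀ v : V, {v} ∈ K)
    (c : V → Fin (m + 1)) (hc : Function.Surjective c)
    (hH : RedHVanish F F V K ((m : ℤ) - 1))
    (h : ∀ S : Finset (Fin (m + 1)), 1 ≤ S.card → S.card ≤ m →
      RedHVanish F F V {s ∈ K | ¬ S ⊆ s.image c} ((S.card : ℤ) - 2)) :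
    ∃ s ∈ K, ∀ i : Fin (m + 1), ∃! v, v ∈ s ∧ c v = i := by
  exact sperner_via_tilde_general F m K hK c hH h
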